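/- Let 2 ≤ t ≤ n and let r_1 < r_2 < ⋯ < r_{t-1} be consecutive integers in {1,…,n-1} (i.e., r_{k+1} = r_k + 1). Let θ = π(ρ_{r_1} ρ_{r_2} ⋯ ρ_{r_{t-1}}) ∈ S_n. Given integers a_{i,j} for 1 ≤ i < j ≤ n, extend the notation by a_{j,i} := -a_{i,j} for i < j. Then the coset of the element (∏_{1 ≤ i < j ≤ n} κ_{i,j}^{a_{i,j}}) (ρ_{r_1} ρ_{r_2} ⋯ ρ_{r_{t-1}}) has order t in the quotient VL_n/PVL_n' if and only if for every pair (r,s) with 1 ≤ r < s ≤ n, the sum a_{r,s} + a_{θ^{-1}(r), θ^{-1}(s)} + ⋯ + a_{θ^{-(t-1)}(r), θ^{-(t-1)}(s)} = 0 (it suffices to check this for one representative (r,s) from each orbit of the θ-action on pairs). -/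

import Mathlib

open FreeGroup

/-- Generators of the virtual triplet group `VL n`: `Sum.inl i` is `y_{i+1}`,
`Sum.inr i` is `ρ_{i+1}`. -/
abbrev VLGen (n : ℕ) := Fin (n - 1) ⊕ Fin (n - 1)

def fY {n : ℕ} (i : Fin (n - 1)) : FreeGroup (VLGen n) := FreeGroup.of (Sum.inl i)
def fP {n : ℕ} (i : Fin (n - 1)) : FreeGroup (VLGen n) := FreeGroup.of (Sum.inr i)

/-- Defining relators of the virtual triplet group `VL n` (indices are 0-based: index `i`
corresponds to the generator with subscript `i+1`). -/
def vlRels (n : ℕ) : Set (FreeGroup (VLGen n)) :=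
  {r | (∃ i, r = fY i ^ 2) ∨ (∃ i, r = fP i ^ 2) ∨
    (∃ i j : Fin (n - 1), (i : ℕ) + 2 ≤ (j : ℕ) ∧ r = fP i * fP j * (fP i)⁻¹ * (fP j)⁻¹) ∨
    (∃ i j : Fin (n - 1), ((i : ℕ) + 2 ≤ (j : ℕ) ∨ (j : ℕ) + 2 ≤ (i : ℕ)) ∧
      r = fY i * fP j * (fY i)⁻¹ * (fP j)⁻¹) ∨
    (∃ i j : Fin (n - 1), (j : ℕ) = (i : ℕ) + 1 ∧
      r = fY i * fY j * fY i * (fY j * fY i * fY j)⁻¹) ∨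
    (∃ i j : Fin (n - 1), (j : ℕ) = (i : ℕ) + 1 ∧
      r = fP i * fP j * fP i * (fP j * fP i * fP j)⁻¹) ∨
    (∃ i j : Fin (n - 1), (j : ℕ) = (i : ℕ) + 1 ∧
      r = fP i * fY j * fP i * (fP j * fY i * fP j)⁻¹)}

/-- The virtual triplet group `VL n`. -/
abbrev VL (n : ℕ) := PresentedGroup (vlRels n)

/-- The generator `y_{i+1}` of `VL n`. -/
def yG {n : ℕ} (i : Fin (n - 1)) : VL n := PresentedGroup.of (Sum.inl i)
/-- The generator `ρ_{i+1}` of `VL n`. -/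
def pG {n : ℕ} (i : Fin (n - 1)) : VL n := PresentedGroup.of (Sum.inr i)

/-- The generator `y_k` of `VL n` with 1-based subscript `k` (junk value `1` if `k` is
out of range). -/
def yN (n k : ℕ) : VL n :=
  if h : 1 ≤ k ∧ k ≤ n - 1 then yG ⟨k - 1, by omega⟩ else 1

/-- The generator `ρ_k` of `VL n` with 1-based subscript `k` (junk value `1` if `k` is
out of range). -/
def pN (n k : ℕ) : VL n :=
  if h : 1 ≤ k ∧ k ≤ n - 1 then pG ⟨k - 1, by omega⟩ else 1

/-- For `i < j`, the element `κ_{i,j} = ρ_{j-1} ρ_{j-2} ⋯ ρ_{i+1} (y_i ρ_i) ρ_{i+1} ⋯ ρ_{j-1}`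
of `VL n` (1-based subscripts); for `j = i+1` this is `y_i ρ_i`. -/
def kappaLT (n i j : ℕ) : VL n :=
  (((List.range' (i + 1) (j - 1 - i)).map (pN n)).reverse).prod * (yN n i * pN n i) *
    ((List.range' (i + 1) (j - 1 - i)).map (pN n)).prod

/-- The element `κ_{i,j}` of `VL n`, for `1 ≤ i ≠ j ≤ n` (1-based subscripts), with the
convention `κ_{j,i} = κ_{i,j}⁻¹` for `i < j`. -/
def kappa (n i j : ℕ) : VL n := if i < j then kappaLT n i j else (kappaLT n j i)⁻¹

/-- The list of all pairs `(i, j)` with `1 ≤ i < j ≤ n` (1-based subscripts). -/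
def pairsL (n : ℕ) : List (ℕ × ℕ) :=
  ((List.range' 1 n).flatMap fun i => (List.range' 1 n).map fun j => (i, j)).filter
    fun p => p.1 < p.2


/-!
Write `g = k w`, where `k` is the product of powers of the `κ_{i,j}`. The statement is about
`g ^ t` modulo commutators of pure elements, and it follows from two facts.

* There is a homomorphism `rep : VL n → ℤ^{n × n} ⋊ S_n` over the symmetric group, sending
  `κ_{i,j}` to the vector `e_{i,j} - e_{j,i}` and `ρ_i` to a transposition. Pure elements go to
  translations, so commutators of pure elements are killed (`commutator_le_ker`). By
  `PairExt.pow_f` and `rep_prod_kappa`, the `(u, v)` entry of the image of `g ^ t` is the sum of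
  `a` over the first `t` points of the `θ⁻¹`-orbit of `(u, v)`.

* Conjugation by `ρ_m` permutes the `κ_{i,j}^{±1}`, so the subgroup they generate is normalized
  by `w` (`prod_conj_mem`). Since `w ^ t = 1` already in `VL n` (`cyc_pow`), it contains `g ^ t`
  (`pow_mul_mem`). In the abelianization of the pure subgroup, an element of this subgroup is
  the product of the `κ_{i,j}`, `i < j`, raised to the entries of its image under `rep`
  (`of_eq_expand`), so `rep` detects whether it is a product of commutators.

Hence `g ^ t` is trivial in the quotient exactly when all the orbit sums vanish. No smaller
positive power is ever trivial, because `θ` is a cycle of length `t` (`cyc_pow_ne_one`).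
-/

/-! ### The group `ℤ^{n × n} ⋊ S_n` -/

/-- The semidirect product `ℤ^{n × n} ⋊ S_n`, the symmetric group permuting both coordinates of
an ordered pair simultaneously: `(f, σ) (g, τ) = (f + g ∘ σ⁻¹, σ τ)`. -/
@[ext] structure PairExt (n : ℕ) where
  /-- the vector of exponents, indexed by ordered pairs -/
  f : Fin n → Fin n → ℤ
  /-- the permutation -/
  σ : Equiv.Perm (Fin n)

namespace PairExt

variable {n : ℕ}

instance : Mul (PairExt n) :=
  ⟨fun x y => ⟨fun u v => x.f u v + y.f (x.σ⁻¹ u) (x.σ⁻¹ v), x.σ * y.σ⟩⟩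
instance : One (PairExt n) := ⟨⟨fun _ _ => 0, 1⟩⟩
instance : Inv (PairExt n) := ⟨fun x => ⟨fun u v => -x.f (x.σ u) (x.σ v), x.σ⁻¹⟩⟩

@[simp] lemma mul_f (x y : PairExt n) (u v : Fin n) :
    (x * y).f u v = x.f u v + y.f (x.σ⁻¹ u) (x.σ⁻¹ v) := rfl
@[simp] lemma mul_σ (x y : PairExt n) : (x * y).σ = x.σ * y.σ := rfl
@[simp] lemma one_f (u v : Fin n) : (1 : PairExt n).f u v = 0 := rfl
@[simp] lemma one_σ : (1 : PairExt n).σ = 1 := rfl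
@[simp] lemma inv_f (x : PairExt n) (u v : Fin n) :
    (x⁻¹).f u v = -x.f (x.σ u) (x.σ v) := rfl
@[simp] lemma inv_σ (x : PairExt n) : (x⁻¹).σ = x.σ⁻¹ := rfl

instance : Group (PairExt n) :=
  Group.ofLeftAxioms
    (fun x y z => by ext <;> simp [add_assoc])
    (fun x => by ext <;> simp)
    (fun x => by ext <;> simp)

/-- The projection onto the symmetric group. -/
def proj : PairExt n →* Equiv.Perm (Fin n) where
  toFun := PairExt.σ
  map_one' := rfl
  map_mul' _ _ := rfl

/-- The skew-symmetric elementary vector `e_{p,q} - e_{q,p}`. -/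
def E (p q u v : Fin n) : ℤ :=
  (if u = p ∧ v = q then 1 else 0) - (if u = q ∧ v = p then 1 else 0)

lemma E_swap (p q u v : Fin n) : E q p u v = -E p q u v := by
  simp [E]

lemma E_self {p q : Fin n} (h : p < q) : E p q p q = 1 := by
  simp [E, h.ne]

lemma E_of_ne {p q u v : Fin n} (h : p < q) (huv : u < v) (hne : (u, v) ≠ (p, q)) :
    E p q u v = 0 := by
  unfold E
  rw [if_neg, if_neg, sub_zero]
  · rintro ⟨rfl, rfl⟩
    exact lt_asymm h huv
  · rintro ⟨rfl, rfl⟩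
    exact hne rfl

lemma E_inv (s : Equiv.Perm (Fin n)) (p q u v : Fin n) :
    E p q (s⁻¹ u) (s⁻¹ v) = E (s p) (s q) u v := by
  simp only [E, Equiv.Perm.inv_eq_iff_eq]

lemma pow_f (x : PairExt n) (l : ℕ) (u v : Fin n) :
    (x ^ l).f u v = ∑ i ∈ Finset.range l, x.f ((x.σ⁻¹ ^ i) u) ((x.σ⁻¹ ^ i) v) := by
  have hσ (l : ℕ) : (x ^ l).σ = x.σ ^ l := map_pow proj x l
  induction l with
  | zero => simp
  | succ l ih => rw [pow_succ, mul_f, ih, Finset.sum_range_succ, hσ, inv_pow]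

lemma zpow_of_σ_eq_one (h : Fin n → Fin n → ℤ) (z : ℤ) :
    (⟨h, 1⟩ : PairExt n) ^ z = ⟨fun u v => z * h u v, 1⟩ := by
  let F : Multiplicative ℤ →* PairExt n :=
    { toFun := fun z => ⟨fun u v => z.toAdd * h u v, 1⟩
      map_one' := by ext <;> simp
      map_mul' := fun a b => by ext <;> simp [add_mul] }
  have h1 := map_zpow F (Multiplicative.ofAdd 1) z
  have h2 : F (Multiplicative.ofAdd 1) = ⟨h, 1⟩ := by ext <;> simp [F]
  rw [h2] at h1
  rw [← h1]
  ext <;> simp [F]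

end PairExt

/-! ### Relations in `VL n` with 1-based generators -/

section Relations

variable {n : ℕ}

lemma pG_sq (i : Fin (n - 1)) : (pG i : VL n) * pG i = 1 := by
  have := PresentedGroup.one_of_mem (rels := vlRels n) (x := fP i ^ 2)
    (Or.inr (Or.inl ⟨i, rfl⟩))
  simpa [pow_two, fP, pG, PresentedGroup.of] using this

lemma yG_sq (i : Fin (n - 1)) : (yG i : VL n) * yG i = 1 := by
  have := PresentedGroup.one_of_mem (rels := vlRels n) (x := fY i ^ 2)
    (Or.inl ⟨i, rfl⟩)
  simpa [pow_two, fY, yG, PresentedGroup.of] using this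

lemma pG_comm (i j : Fin (n - 1)) (h : (i : ℕ) + 2 ≤ j) :
    (pG i : VL n) * pG j = pG j * pG i := by
  have this : (pG i * pG j * (pG i)⁻¹ * (pG j)⁻¹ : VL n) = 1 := PresentedGroup.one_of_mem (rels := vlRels n)
    (x := fP i * fP j * (fP i)⁻¹ * (fP j)⁻¹) (Or.inr (Or.inr (Or.inl ⟨i, j, h, rfl⟩)))
  rw [mul_inv_eq_one, mul_inv_eq_iff_eq_mul] at this
  exact this

lemma yG_pG_comm (i j : Fin (n - 1)) (h : (i : ℕ) + 2 ≤ j ∨ (j : ℕ) + 2 ≤ i) :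
    (yG i : VL n) * pG j = pG j * yG i := by
  have this : (yG i * pG j * (yG i)⁻¹ * (pG j)⁻¹ : VL n) = 1 := PresentedGroup.one_of_mem (rels := vlRels n)
    (x := fY i * fP j * (fY i)⁻¹ * (fP j)⁻¹)
    (Or.inr (Or.inr (Or.inr (Or.inl ⟨i, j, h, rfl⟩))))
  rw [mul_inv_eq_one, mul_inv_eq_iff_eq_mul] at this
  exact this

lemma pG_braid (i j : Fin (n - 1)) (h : (j : ℕ) = i + 1) :
    (pG i : VL n) * pG j * pG i = pG j * pG i * pG j := by
  have this : (pG i * pG j * pG i * (pG j * pG i * pG j)⁻¹ : VL n) = 1 := PresentedGroup.one_of_mem (rels := vlRels n)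
    (x := fP i * fP j * fP i * (fP j * fP i * fP j)⁻¹)
    (Or.inr (Or.inr (Or.inr (Or.inr (Or.inr (Or.inl ⟨i, j, h, rfl⟩))))))
  rw [mul_inv_eq_one] at this
  exact this

lemma pG_yG_braid (i j : Fin (n - 1)) (h : (j : ℕ) = i + 1) :
    (pG i : VL n) * yG j * pG i = pG j * yG i * pG j := by
  have this : (pG i * yG j * pG i * (pG j * yG i * pG j)⁻¹ : VL n) = 1 := PresentedGroup.one_of_mem (rels := vlRels n)
    (x := fP i * fY j * fP i * (fP j * fY i * fP j)⁻¹)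
    (Or.inr (Or.inr (Or.inr (Or.inr (Or.inr (Or.inr ⟨i, j, h, rfl⟩))))))
  rw [mul_inv_eq_one] at this
  exact this

lemma pN_sq (n k : ℕ) : pN n k * pN n k = 1 := by
  unfold pN; split_ifs
  · exact pG_sq _
  · simp

lemma yN_sq (n k : ℕ) : yN n k * yN n k = 1 := by
  unfold yN; split_ifs
  · exact yG_sq _
  · simp

lemma pN_inv (n k : ℕ) : (pN n k)⁻¹ = pN n k := inv_eq_of_mul_eq_one_left (pN_sq n k)

lemma pN_mul_cancel (n k : ℕ) (x : VL n) : pN n k * (pN n k * x) = x := by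
  rw [← mul_assoc, pN_sq, one_mul]

lemma pN_comm (n : ℕ) {i j : ℕ} (h : i + 2 ≤ j ∨ j + 2 ≤ i) : Commute (pN n i) (pN n j) := by
  unfold pN; split_ifs with h1 h2
  · rcases h with h | h
    · exact pG_comm _ _ (by simp; omega)
    · exact (pG_comm _ _ (by simp; omega)).symm
  all_goals simp

lemma yN_pN_comm (n : ℕ) {i j : ℕ} (h : i + 2 ≤ j ∨ j + 2 ≤ i) :
    Commute (yN n i) (pN n j) := by
  unfold yN pN; split_ifs with h1 h2
  · exact yG_pG_comm _ _ (by simp; omega)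
  all_goals simp

lemma pN_braid {n i : ℕ} (h1 : 1 ≤ i) (h2 : i + 1 ≤ n - 1) :
    pN n i * pN n (i + 1) * pN n i = pN n (i + 1) * pN n i * pN n (i + 1) := by
  unfold pN
  rw [dif_pos (by omega), dif_pos (by omega)]
  exact pG_braid _ _ (by simp; omega)

lemma pN_yN_braid {n i : ℕ} (h1 : 1 ≤ i) (h2 : i + 1 ≤ n - 1) :
    pN n i * yN n (i + 1) * pN n i = pN n (i + 1) * yN n i * pN n (i + 1) := by
  unfold pN yN
  rw [dif_pos (by omega), dif_pos (by omega), dif_pos (by omega), dif_pos (by omega)]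
  exact pG_yG_braid _ _ (by simp; omega)

end Relations

/-! ### Conjugation of the `κ_{i,j}` by the `ρ_m` -/

section Conjugation

variable {n : ℕ}

lemma kappaLT_succ_self (n i : ℕ) : kappaLT n i (i + 1) = yN n i * pN n i := by
  simp [kappaLT]

lemma kappaLT_succ (n : ℕ) {i j : ℕ} (h : i < j) :
    kappaLT n i (j + 1) = pN n j * kappaLT n i j * pN n j := by
  have e : j + 1 - 1 - i = (j - 1 - i) + 1 := by omega
  have e2 : i + 1 + (j - 1 - i) = j := by omega
  unfold kappaLT
  rw [e, List.range'_1_concat, e2]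
  simp [mul_assoc]

/-- `ρ_m` commutes with `κ_{i,j}` when `{m, m+1}` lies entirely above `j` or below `i`. -/
lemma commute_outside (n : ℕ) {m i j : ℕ} (hij : i < j) (h : j + 1 ≤ m ∨ m + 2 ≤ i) :
    Commute (pN n m) (kappaLT n i j) := by
  induction j, hij using Nat.le_induction with
  | base =>
    rw [kappaLT_succ_self]
    exact (yN_pN_comm n (by omega)).symm.mul_right (pN_comm n (by omega))
  | succ j hj ih =>
    rw [kappaLT_succ n hj]
    have := pN_comm n (i := m) (j := j) (by omega)
    exact (this.mul_right (ih (by omega))).mul_right this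

/-- `ρ_m` commutes with `κ_{i,j}` when `{m, m+1}` lies strictly between `i` and `j`. -/
lemma commute_inside {m i j : ℕ} (hi : 1 ≤ i) (him : i < m) (hmj : m + 2 ≤ j) (hj : j ≤ n) :
    Commute (pN n m) (kappaLT n i j) := by
  induction j, hmj using Nat.le_induction with
  | base =>
    rw [kappaLT_succ n (by omega : i < m + 1), kappaLT_succ n him]
    have hb := pN_braid (n := n) (i := m) (by omega) (by omega)
    have hc := (commute_outside n (m := m + 1) him (by omega)).eq
    have hb' (x : VL n) : pN n m * (pN n (m + 1) * (pN n m * x)) =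
        pN n (m + 1) * (pN n m * (pN n (m + 1) * x)) := by
      simpa only [mul_assoc] using congrArg (· * x) hb
    simp only [Commute, SemiconjBy, mul_assoc] at hb ⊢
    rw [hb', hb, ← mul_assoc (pN n (m + 1)) (kappaLT n i m), hc, mul_assoc]
  | succ j hj ih =>
    rw [kappaLT_succ n (by omega)]
    have := pN_comm n (i := m) (j := j) (by omega)
    exact (this.mul_right (ih (by omega))).mul_right this

/-- Conjugation by `ρ_i` raises the smaller index of `κ_{i,j}`; as `ρ_i` is an involution it also
lowers `i + 1` to `i`. -/
lemma conj_left {i j : ℕ} (hi : 1 ≤ i) (hij : i + 2 ≤ j) (hj : j ≤ n) :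
    pN n i * kappaLT n i j * pN n i = kappaLT n (i + 1) j := by
  induction j, hij using Nat.le_induction with
  | base =>
    rw [kappaLT_succ n (by omega : i < i + 1), kappaLT_succ_self, kappaLT_succ_self]
    have hb := pN_braid (n := n) (i := i) (by omega) (by omega)
    have hy := pN_yN_braid (n := n) (i := i) (by omega) (by omega)
    have hy' (x : VL n) : pN n (i + 1) * (yN n i * (pN n (i + 1) * x)) =
        pN n i * (yN n (i + 1) * (pN n i * x)) := by
      simpa only [mul_assoc] using congrArg (· * x) hy.symm
    simp only [mul_assoc] at hb ⊢
    rw [hb, hy', pN_mul_cancel, pN_mul_cancel]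
  | succ j hj ih =>
    rw [kappaLT_succ n (by omega), kappaLT_succ n (by omega : i + 1 < j), ← ih (by omega)]
    have := (pN_comm n (i := i) (j := j) (by omega)).eq
    simp only [mul_assoc]
    rw [← this, ← mul_assoc, this, mul_assoc]

/-- The subgroup of `VL n` generated by all `κ_{i,j}`. -/
def kappaSubgroup (n : ℕ) : Subgroup (VL n) :=
  Subgroup.closure {x | ∃ i j, 1 ≤ i ∧ i < j ∧ j ≤ n ∧ x = kappaLT n i j}

lemma kappaLT_mem {i j : ℕ} (hi : 1 ≤ i) (hij : i < j) (hj : j ≤ n) :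
    kappaLT n i j ∈ kappaSubgroup n :=
  Subgroup.subset_closure ⟨i, j, hi, hij, hj, rfl⟩

/-- `ρ_m` conjugates `κ_{i,j}` to `κ` of the pair with `m` and `m + 1` exchanged, where
`κ_{j,i} = κ_{i,j}⁻¹`; the cases follow the position of `m` relative to `i < j`. -/
lemma pN_conj_kappaLT_mem (m : ℕ) {i j : ℕ} (hi : 1 ≤ i) (hij : i < j) (hj : j ≤ n) :
    pN n m * kappaLT n i j * pN n m ∈ kappaSubgroup n := by
  by_cases hm : 1 ≤ m ∧ m ≤ n - 1
  swap
  · have : pN n m = 1 := by unfold pN; rw [dif_neg hm]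
    simpa [this] using kappaLT_mem hi hij hj
  have comm (h : Commute (pN n m) (kappaLT n i j)) :
      pN n m * kappaLT n i j * pN n m ∈ kappaSubgroup n := by
    rw [h.eq, mul_assoc, pN_sq, mul_one]
    exact kappaLT_mem hi hij hj
  by_cases h1 : j + 1 ≤ m ∨ m + 2 ≤ i
  · exact comm (commute_outside n hij h1)
  by_cases h2 : i < m ∧ m + 2 ≤ j
  · exact comm (commute_inside hi h2.1 h2.2 hj)
  by_cases h3 : m = j
  · subst h3
    rw [← kappaLT_succ n hij]
    exact kappaLT_mem hi (by omega) (by omega)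
  by_cases h4 : m + 1 = i
  · subst h4
    rw [← conj_left (by omega) (by omega) hj]
    simpa [mul_assoc, pN_mul_cancel, pN_sq] using
      kappaLT_mem (n := n) (i := m) (j := j) (by omega) (by omega) hj
  by_cases h5 : m = i
  · subst h5
    by_cases h6 : j = m + 1
    · subst h6
      have : pN n m * kappaLT n m (m + 1) * pN n m = (kappaLT n m (m + 1))⁻¹ := by
        rw [eq_inv_iff_mul_eq_one, kappaLT_succ_self]
        simp only [mul_assoc, pN_mul_cancel]
        rw [← mul_assoc (yN n m), yN_sq, one_mul, pN_sq]
      rw [this]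
      exact inv_mem (kappaLT_mem hi hij hj)
    · rw [conj_left hi (by omega) hj]
      exact kappaLT_mem (by omega) (by omega) hj
  · obtain rfl : j = m + 1 := by omega
    rw [kappaLT_succ n (by omega)]
    simpa [mul_assoc, pN_mul_cancel, pN_sq] using
      kappaLT_mem (n := n) (i := i) (j := m) (by omega) (by omega) (by omega)

lemma pN_conj_mem (m : ℕ) {x : VL n} (hx : x ∈ kappaSubgroup n) :
    pN n m * x * (pN n m)⁻¹ ∈ kappaSubgroup n := by
  have hle : kappaSubgroup n ≤
      (kappaSubgroup n).comap (MulAut.conj (pN n m)).toMonoidHom := by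
    refine (Subgroup.closure_le _).2 ?_
    rintro _ ⟨i, j, hi, hij, hj, rfl⟩
    have := pN_conj_kappaLT_mem (n := n) m hi hij hj
    simpa [pN_inv] using this
  simpa using hle hx

lemma prod_conj_mem (L : List ℕ) {x : VL n} (hx : x ∈ kappaSubgroup n) :
    (L.map (pN n)).prod * x * ((L.map (pN n)).prod)⁻¹ ∈ kappaSubgroup n := by
  induction L with
  | nil => simpa using hx
  | cons m L ih => simpa [mul_assoc] using pN_conj_mem m ih

/-- If conjugation by `w` preserves the subgroup generated by the `κ_{i,j}` and `k` lies in it,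
then so does `(k w)^l w^{-l}`. -/
lemma pow_mul_mem {k w : VL n} (hk : k ∈ kappaSubgroup n)
    (hw : ∀ x ∈ kappaSubgroup n, w * x * w⁻¹ ∈ kappaSubgroup n) (l : ℕ) :
    (k * w) ^ l * (w ^ l)⁻¹ ∈ kappaSubgroup n := by
  induction l with
  | zero => simp
  | succ l ih =>
    have : (k * w) ^ (l + 1) * (w ^ (l + 1))⁻¹ =
        k * (w * ((k * w) ^ l * (w ^ l)⁻¹) * w⁻¹) := by
      rw [pow_succ' (k * w), pow_succ' w]; group
    rw [this]
    exact mul_mem hk (hw _ ih)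

end Conjugation

/-! ### The order of `ρ_r ⋯ ρ_{r+m-1}` -/

section Cycle

/-- The element `ρ_r ρ_{r+1} ⋯ ρ_{r+m-1}`. -/
def cyc (n r m : ℕ) : VL n := ((List.range' r m).map (pN n)).prod

lemma cyc_succ (n r m : ℕ) : cyc n r (m + 1) = cyc n r m * pN n (r + m) := by
  simp [cyc, List.range'_1_concat]

/-- `ρ_{r+i+1} c = c ρ_{r+i}` for `c = ρ_r ⋯ ρ_{r+m-1}` and `i + 1 < m`. -/
lemma pN_mul_cyc {n r m i : ℕ} (hr : 1 ≤ r) (hm : r + m ≤ n) (hi : i + 1 < m) :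
    pN n (r + i + 1) * cyc n r m = cyc n r m * pN n (r + i) := by
  have hcomm (l m : ℕ) (h : r + m + 1 ≤ l) : Commute (pN n l) (cyc n r m) := by
    induction m with
    | zero => simp [cyc]
    | succ m ih =>
      rw [cyc_succ]
      exact (ih (by omega)).mul_right (pN_comm n (by omega))
  induction m, (show i + 2 ≤ m from hi) using Nat.le_induction with
  | base =>
    rw [cyc_succ, cyc_succ]
    have hb := pN_braid (n := n) (i := r + i) (by omega) (by omega)
    have hc := (hcomm (r + i + 1) i (by omega)).eq
    rw [mul_assoc, ← add_assoc, ← mul_assoc, ← mul_assoc, hc]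
    simp only [mul_assoc] at hb ⊢
    rw [hb]
  | succ m hm' ih =>
    rw [cyc_succ, ← mul_assoc, ih (by omega) (by omega), mul_assoc, mul_assoc,
      (pN_comm n (i := r + i) (j := r + m) (by omega)).eq]

/-- The product of the last `k` letters of `cyc n r m`, reversed: `ρ_{r+m-1} ρ_{r+m-2} ⋯ ρ_{r+m-k}`. -/
def revCyc (n r m : ℕ) : ℕ → VL n
  | 0 => 1
  | k + 1 => revCyc n r m k * pN n (r + m - (k + 1))

lemma pN_mul_cyc_pow {n r m k : ℕ} (hr : 1 ≤ r) (hm : r + m ≤ n) (hk : k < m) :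
    pN n (r + m - 1) * cyc n r m ^ k = cyc n r m ^ k * pN n (r + m - 1 - k) := by
  induction k with
  | zero => simp
  | succ k ih =>
    have h := pN_mul_cyc (n := n) (r := r) (m := m) (i := m - 2 - k) hr hm (by omega)
    rw [show r + (m - 2 - k) + 1 = r + m - 1 - k by omega,
      show r + (m - 2 - k) = r + m - 1 - (k + 1) by omega] at h
    rw [pow_succ, ← mul_assoc, ih (by omega), mul_assoc, h, mul_assoc]

/-- `c_{m+1} ^ k = c_m ^ k ρ_{r+m} ⋯ ρ_{r+m+1-k}`, obtained by moving the last letter `ρ_{r+m}` of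
each factor `c_{m+1}` to the right through the remaining ones. -/
lemma cyc_succ_pow {n r m k : ℕ} (hr : 1 ≤ r) (hm : r + (m + 1) ≤ n) (hk : k ≤ m + 1) :
    cyc n r (m + 1) ^ k = cyc n r m ^ k * revCyc n r (m + 1) k := by
  induction k with
  | zero => simp [revCyc]
  | succ k ih =>
    have h := pN_mul_cyc_pow (n := n) (r := r) (m := m + 1) (k := k) hr hm (by omega)
    rw [show r + (m + 1) - 1 = r + m by omega] at h
    rw [pow_succ', ← mul_one (cyc n r (m + 1) ^ k)]
    nth_rw 1 [cyc_succ]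
    rw [mul_one, mul_assoc, h, ih (by omega), revCyc, pow_succ']
    simp only [mul_assoc]
    rw [show r + (m + 1) - (k + 1) = r + m - k by omega]

lemma cyc_mul_revCyc (n r m : ℕ) : cyc n r m * revCyc n r m m = 1 := by
  have aux (k : ℕ) (hk : k ≤ m) : cyc n r m * revCyc n r m k = cyc n r (m - k) := by
    induction k with
    | zero => simp [revCyc]
    | succ k ih =>
      rw [revCyc, ← mul_assoc, ih (by omega), show m - k = m - (k + 1) + 1 by omega,
        cyc_succ, show r + (m - (k + 1)) = r + m - (k + 1) by omega, mul_assoc, pN_sq, mul_one]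
  rw [aux m le_rfl]
  simp [cyc]

/-- The Coxeter element `c_m` of a parabolic subgroup of type `A_m` has order dividing `m + 1`,
by induction on `m`: `c_{m+1} ^ (m+1) = c_m ^ (m+1) * c_{m+1}⁻¹`. -/
lemma cyc_pow {n r : ℕ} (hr : 1 ≤ r) (m : ℕ) (hm : r + m ≤ n) : cyc n r m ^ (m + 1) = 1 := by
  induction m with
  | zero => simp [cyc]
  | succ m ih =>
    rw [pow_succ', cyc_succ_pow hr hm le_rfl, ih (by omega), one_mul, cyc_mul_revCyc]

end Cycle

/-! ### The representation of `VL n` -/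

section Representation

open PairExt

variable {n : ℕ}

/-- The smaller of the two points (0-based) exchanged by the `i`-th generators. -/
def lo (i : Fin (n - 1)) : Fin n := Fin.castLE (Nat.sub_le n 1) i

/-- The larger of the two points (0-based) exchanged by the `i`-th generators. -/
def hi (i : Fin (n - 1)) : Fin n := ⟨(i : ℕ) + 1, by have := i.isLt; omega⟩

/-- The images of the generators: `y_i ↦ (e_{i,i+1} - e_{i+1,i}, (i, i+1))` and
`ρ_i ↦ (0, (i, i+1))`. -/
def genImage : VLGen n → PairExt n
  | Sum.inl i => ⟨E (lo i) (hi i), Equiv.swap (lo i) (hi i)⟩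
  | Sum.inr i => ⟨fun _ _ => 0, Equiv.swap (lo i) (hi i)⟩

lemma swap_braid {α : Type*} [DecidableEq α] {a b c : α} (hab : a ≠ b) (hbc : b ≠ c)
    (hac : a ≠ c) :
    Equiv.swap a b * Equiv.swap b c * Equiv.swap a b =
      Equiv.swap b c * Equiv.swap a b * Equiv.swap b c := by
  have h1 := Equiv.swap_mul_swap_mul_swap (x := c) (y := b) (z := a) hbc.symm hac.symm
  have h2 := Equiv.swap_mul_swap_mul_swap (x := a) (y := b) (z := c) hab hac
  rw [Equiv.swap_comm b a, Equiv.swap_comm c b] at h1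
  rw [h1, h2, Equiv.swap_comm]

lemma swap_far {i j : Fin (n - 1)} (h : (i : ℕ) + 2 ≤ j ∨ (j : ℕ) + 2 ≤ i) :
    Equiv.swap (lo i) (hi i) * Equiv.swap (lo j) (hi j) =
      Equiv.swap (lo j) (hi j) * Equiv.swap (lo i) (hi i) := by
  refine (Equiv.Perm.Disjoint.commute ?_).eq
  rw [Equiv.Perm.disjoint_iff_disjoint_support, Equiv.Perm.support_swap, Equiv.Perm.support_swap]
  · simp [lo, hi, Fin.ext_iff]; omega
  all_goals simp [lo, hi, Fin.ext_iff]

/-- The relation `y_i y_j y_i = y_j y_i y_j` holds because both sides have exponent vector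
`E_{i,i+1} + E_{i,i+2} + E_{i+1,i+2}`; in the others the vectors match term by term. -/
lemma lift_rel : ∀ r ∈ vlRels n, FreeGroup.lift (genImage (n := n)) r = 1 := by
  have hY (i : Fin (n - 1)) : FreeGroup.lift (genImage (n := n)) (fY i) =
      ⟨E (lo i) (hi i), Equiv.swap (lo i) (hi i)⟩ := by simp [fY, genImage]
  have hP (i : Fin (n - 1)) : FreeGroup.lift (genImage (n := n)) (fP i) =
      ⟨fun _ _ => 0, Equiv.swap (lo i) (hi i)⟩ := by simp [fP, genImage]
  have hne (i : Fin (n - 1)) : lo i ≠ hi i := by simp [lo, hi, Fin.ext_iff]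
  have hjs {i j : Fin (n - 1)} (h : (j : ℕ) = i + 1) : lo j = hi i := by
    simp [lo, hi, Fin.ext_iff, h]
  have hne1 {i j : Fin (n - 1)} (h : (j : ℕ) = i + 1) : lo i ≠ hi j := by
    simp [lo, hi, Fin.ext_iff, h]; omega
  have hne2 {i j : Fin (n - 1)} (h : (j : ℕ) = i + 1) : hi i ≠ hi j := by
    simp [hi, Fin.ext_iff, h]
  rintro r (⟨i, rfl⟩ | ⟨i, rfl⟩ | ⟨i, j, h, rfl⟩ | ⟨i, j, h, rfl⟩ | ⟨i, j, h, rfl⟩ |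
    ⟨i, j, h, rfl⟩ | ⟨i, j, h, rfl⟩)
  · rw [_root_.map_pow, hY, pow_two]
    apply PairExt.ext
    · funext u v
      simp only [mul_f, E_inv]
      simp [E_swap (lo i) (hi i)]
    · simp
  · rw [_root_.map_pow, hP, pow_two]
    apply PairExt.ext
    · funext u v; simp
    · simp
  · simp only [_root_.map_mul, _root_.map_inv, hP]
    rw [mul_inv_eq_one, mul_inv_eq_iff_eq_mul]
    apply PairExt.ext
    · funext u v; simp
    · exact swap_far (Or.inl h)
  · simp only [_root_.map_mul, _root_.map_inv, hP, hY]
    rw [mul_inv_eq_one, mul_inv_eq_iff_eq_mul]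
    apply PairExt.ext
    · funext u v
      have e1 : Equiv.swap (lo j) (hi j) (lo i) = lo i :=
        Equiv.swap_apply_of_ne_of_ne (by simp [lo, Fin.ext_iff]; omega)
          (by simp [lo, hi, Fin.ext_iff]; omega)
      have e2 : Equiv.swap (lo j) (hi j) (hi i) = hi i :=
        Equiv.swap_apply_of_ne_of_ne (by simp [lo, hi, Fin.ext_iff]; omega)
          (by simp [hi, Fin.ext_iff]; omega)
      simp only [mul_f, E_inv]
      simp [e1, e2]
    · exact swap_far h
  all_goals
    simp only [_root_.map_mul, _root_.map_inv, hP, hY]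
    rw [mul_inv_eq_one]
    have s1 := swap_braid (hne i) (hne2 h) (hne1 h)
    have e1 : Equiv.swap (hi i) (hi j) (lo i) = lo i :=
      Equiv.swap_apply_of_ne_of_ne (hne i) (hne1 h)
    have e2 : Equiv.swap (lo i) (hi i) (hi j) = hi j :=
      Equiv.swap_apply_of_ne_of_ne (hne1 h).symm (hne2 h).symm
    rw [hjs h]
    apply PairExt.ext
    · funext u v
      simp only [mul_f, mul_σ, E_inv] <;> simp [e1, e2] <;> ring
    · exact s1

/-- The homomorphism `VL n → ℤ^{n × n} ⋊ S_n` given on generators by `genImage`. -/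
def rep (n : ℕ) : VL n →* PairExt n := PresentedGroup.toGroup (lift_rel (n := n))

lemma rep_yG (i : Fin (n - 1)) :
    rep n (yG i) = ⟨E (lo i) (hi i), Equiv.swap (lo i) (hi i)⟩ :=
  PresentedGroup.toGroup.of _

lemma rep_pG (i : Fin (n - 1)) :
    rep n (pG i) = ⟨fun _ _ => 0, Equiv.swap (lo i) (hi i)⟩ :=
  PresentedGroup.toGroup.of _

lemma rep_pN_f (m : ℕ) (u v : Fin n) : (rep n (pN n m)).f u v = 0 := by
  unfold pN; split_ifs
  · rw [rep_pG]
  · simp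

lemma rep_cyc_f (r m : ℕ) (u v : Fin n) : (rep n (cyc n r m)).f u v = 0 := by
  induction m generalizing u v with
  | zero => simp [cyc]
  | succ m ih => rw [cyc_succ, _root_.map_mul, mul_f, ih, rep_pN_f, add_zero]

lemma rep_kappaLT {i j : ℕ} (hi1 : 1 ≤ i) (hij : i < j) (hj : j ≤ n) :
    rep n (kappaLT n i j) = ⟨E ⟨i - 1, by omega⟩ ⟨j - 1, by omega⟩, 1⟩ := by
  induction j, hij using Nat.le_induction with
  | base =>
    rw [kappaLT_succ_self]
    unfold yN pN
    rw [dif_pos (by omega), dif_pos (by omega), _root_.map_mul, rep_yG, rep_pG]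
    have e1 : lo (⟨i - 1, by omega⟩ : Fin (n - 1)) = ⟨i - 1, by omega⟩ := rfl
    have e2 : hi (⟨i - 1, by omega⟩ : Fin (n - 1)) = ⟨i + 1 - 1, by omega⟩ := by
      simp [hi]; omega
    rw [e1, e2]
    apply PairExt.ext
    · funext u v; simp
    · simp
  | succ j hij ih =>
    rw [kappaLT_succ n hij]
    unfold pN
    rw [dif_pos (by omega), _root_.map_mul, _root_.map_mul, ih (by omega), rep_pG]
    have e1 : lo (⟨j - 1, by omega⟩ : Fin (n - 1)) = ⟨j - 1, by omega⟩ := rfl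
    have e2 : hi (⟨j - 1, by omega⟩ : Fin (n - 1)) = ⟨j + 1 - 1, by omega⟩ := by
      simp [hi]; omega
    rw [e1, e2]
    apply PairExt.ext
    · funext u v
      simp only [mul_f, E_inv, Equiv.swap_apply_left, zero_add, add_zero]
      rw [Equiv.swap_apply_of_ne_of_ne] <;> simp [Fin.ext_iff] <;> omega
    · simp

end Representation

/-! ### The abelianization of the pure subgroup -/

section Pure

open PairExt

variable {n : ℕ} {π : VL n →* Equiv.Perm (Fin n)}

lemma rep_σ (hπy : ∀ i : Fin (n - 1), π (yG i) = Equiv.swap (lo i) (hi i))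
    (hπp : ∀ i : Fin (n - 1), π (pG i) = Equiv.swap (lo i) (hi i)) (x : VL n) :
    (rep n x).σ = π x := by
  have : proj.comp (rep n) = π := by
    refine PresentedGroup.ext ?_
    rintro (i | i)
    · exact (congrArg PairExt.σ (rep_yG i)).trans (hπy i).symm
    · exact (congrArg PairExt.σ (rep_pG i)).trans (hπp i).symm
  exact DFunLike.congr_fun this x

/-- Pure elements act by translations only, and translations commute. -/
lemma commutator_le_ker (hσ : ∀ x, (rep n x).σ = π x) : ⁅π.ker, π.ker⁆ ≤ (rep n).ker := by
  rw [Subgroup.commutator_le]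
  intro x hx y hy
  have hx' : (rep n x).σ = 1 := by rw [hσ]; exact hx
  have hy' : (rep n y).σ = 1 := by rw [hσ]; exact hy
  rw [MonoidHom.mem_ker, map_commutatorElement, commutatorElement_eq_one_iff_mul_comm]
  ext
  · simp [hx', hy', add_comm]
  · simp [hx', hy']

lemma kappaLT_mem_ker (hσ : ∀ x, (rep n x).σ = π x) {i j : ℕ} (hi1 : 1 ≤ i) (hij : i < j)
    (hj : j ≤ n) : kappaLT n i j ∈ π.ker := by
  rw [MonoidHom.mem_ker, ← hσ, rep_kappaLT hi1 hij hj]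

/-- The pairs `u < v` in `Fin n`. -/
def pairs (n : ℕ) : Finset (Fin n × Fin n) := Finset.univ.filter fun p => p.1 < p.2

/-- The class of `κ_{i,j}`, for `1 ≤ i < j ≤ n`, in the abelianization of the pure subgroup; the
pair `(i, j)` is given 0-based. -/
noncomputable def kappaAb (hσ : ∀ x, (rep n x).σ = π x) (p : pairs n) : Abelianization π.ker :=
  Abelianization.of ⟨kappaLT n (p.1.1 + 1) (p.1.2 + 1),
    kappaLT_mem_ker hσ (by omega)
      (Nat.add_lt_add_right (Fin.lt_def.1 (Finset.mem_filter.1 p.2).2) 1) (by omega)⟩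

/-- The homomorphism sending a pure element to the class of `∏ κ_{i,j} ^ b_{i,j}` in the
abelianization, with exponents `b_{i,j}` read off from its image in `ℤ^{n × n}`. -/
noncomputable def expand (hσ : ∀ x, (rep n x).σ = π x) : π.ker →* Abelianization π.ker where
  toFun x := ∏ p : pairs n, kappaAb hσ p ^ (rep n x).f p.1.1 p.1.2
  map_one' := by simp
  map_mul' x y := by
    have hx : (rep n (x : VL n)).σ = 1 := by rw [hσ]; exact x.2
    rw [← Finset.prod_mul_distrib]
    refine Finset.prod_congr rfl fun p _ => ?_
    have e : (rep n ((x * y : π.ker) : VL n)).f p.1.1 p.1.2 =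
        (rep n x).f p.1.1 p.1.2 + (rep n y).f p.1.1 p.1.2 := by
      rw [Subgroup.coe_mul, _root_.map_mul, mul_f, hx]; rfl
    rw [e, zpow_add]

/-- Modulo commutators, every element of the subgroup generated by the `κ_{i,j}` is determined by
its exponents in `ℤ^{n × n}`. -/
lemma of_eq_expand (hσ : ∀ x, (rep n x).σ = π x) {x : VL n} (hx : x ∈ kappaSubgroup n) :
    ∃ h : x ∈ π.ker, Abelianization.of ⟨x, h⟩ = expand hσ ⟨x, h⟩ := by
  induction hx using Subgroup.closure_induction with
  | mem x hx =>
    obtain ⟨i, j, hi1, hij, hj, rfl⟩ := hx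
    refine ⟨kappaLT_mem_ker hσ hi1 hij hj, ?_⟩
    let p : pairs n := ⟨(⟨i - 1, by omega⟩, ⟨j - 1, by omega⟩), by
      simp [pairs]; omega⟩
    have hp : kappaAb hσ p = Abelianization.of
        ⟨kappaLT n i j, kappaLT_mem_ker hσ hi1 hij hj⟩ := by
      unfold kappaAb
      congr 2
      simp only [p]
      congr 1 <;> omega
    rw [← hp]
    symm
    change ∏ q : pairs n, kappaAb hσ q ^ (rep n (kappaLT n i j)).f q.1.1 q.1.2 = _
    rw [Finset.prod_eq_single p]
    · rw [rep_kappaLT hi1 hij hj]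
      exact (congrArg _ (E_self (Fin.mk_lt_mk.2 (by omega)))).trans (zpow_one _)
    · rintro ⟨⟨u, v⟩, hq⟩ _ hne
      rw [rep_kappaLT hi1 hij hj]
      refine (congrArg _ (E_of_ne (Fin.mk_lt_mk.2 (by omega)) (Finset.mem_filter.1 hq).2
        fun h => hne (Subtype.ext h))).trans (zpow_zero _)
    · simp
  | one => exact ⟨one_mem _, ((Abelianization.of).map_one).trans ((expand hσ).map_one).symm⟩
  | mul x y _ _ hx hy =>
    obtain ⟨h1, e1⟩ := hx
    obtain ⟨h2, e2⟩ := hy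
    refine ⟨mul_mem h1 h2, ?_⟩
    exact ((Abelianization.of).map_mul (⟨x, h1⟩ : π.ker) ⟨y, h2⟩).trans
      ((congrArg₂ (· * ·) e1 e2).trans ((expand hσ).map_mul ⟨x, h1⟩ ⟨y, h2⟩).symm)
  | inv x _ hx =>
    obtain ⟨h1, e1⟩ := hx
    refine ⟨inv_mem h1, ?_⟩
    exact ((Abelianization.of).map_inv (⟨x, h1⟩ : π.ker)).trans
      ((congrArg (·⁻¹) e1).trans ((expand hσ).map_inv ⟨x, h1⟩).symm)

/-- The representation is faithful on the subgroup generated by the `κ_{i,j}`, modulo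
commutators of pure elements. -/
lemma mem_commutator_of_rep_eq_one (hσ : ∀ x, (rep n x).σ = π x) {x : VL n}
    (hx : x ∈ kappaSubgroup n) (h1 : rep n x = 1) : x ∈ ⁅π.ker, π.ker⁆ := by
  obtain ⟨h, e⟩ := of_eq_expand hσ hx
  have e2 : expand hσ ⟨x, h⟩ = 1 := by simp [expand, h1]
  rw [e2] at e
  have : (⟨x, h⟩ : π.ker) ∈ commutator π.ker := by
    rw [← Abelianization.ker_of]; exact e
  rw [← Subgroup.map_subtype_commutator]
  exact ⟨_, this, rfl⟩

end Pure

/-! ### Exponents of the given element and the order of the cycle -/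

section Exponents

open PairExt

variable {n : ℕ}

lemma mem_pairsL {p : ℕ × ℕ} : p ∈ pairsL n ↔ 1 ≤ p.1 ∧ p.1 < p.2 ∧ p.2 ≤ n := by
  obtain ⟨i, j⟩ := p
  simp [pairsL, List.mem_range'_1]
  omega

lemma nodup_pairsL : (pairsL n).Nodup := by
  unfold pairsL
  refine List.Nodup.filter _ ?_
  exact (List.nodup_range' (s := 1) (n := n)).product (List.nodup_range' (s := 1) (n := n))

lemma prod_kappa_mem (a : ℕ → ℕ → ℤ) :
    ((pairsL n).map fun p => kappa n p.1 p.2 ^ a p.1 p.2).prod ∈ kappaSubgroup n := by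
  refine Subgroup.list_prod_mem _ fun x hx => ?_
  obtain ⟨p, hp, rfl⟩ := List.mem_map.1 hx
  obtain ⟨h1, h2, h3⟩ := mem_pairsL.1 hp
  rw [kappa, if_pos h2]
  exact zpow_mem (kappaLT_mem h1 h2 h3) _

/-- Skew-symmetry of `a` makes the exponent vector of `∏ κ_{i,j} ^ a_{i,j}` equal to `a` on all
ordered pairs, not only on those with `i < j`. -/
lemma rep_prod_kappa (a : ℕ → ℕ → ℤ) (hskew : ∀ i j : ℕ, a j i = - a i j) :
    rep n ((pairsL n).map fun p => kappa n p.1 p.2 ^ a p.1 p.2).prod =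
      ⟨fun u v => a (u + 1) (v + 1), 1⟩ := by
  have key (L : List (ℕ × ℕ)) (hL : ∀ p ∈ L, p ∈ pairsL n) :
      rep n (L.map fun p => kappa n p.1 p.2 ^ a p.1 p.2).prod =
      ⟨fun u v => (L.map fun p => (if p = ((u : ℕ) + 1, (v : ℕ) + 1) then a p.1 p.2 else 0) -
        (if p = ((v : ℕ) + 1, (u : ℕ) + 1) then a p.1 p.2 else 0)).sum, 1⟩ := by
    induction L with
    | nil => rfl
    | cons p L ih =>
      obtain ⟨h1, h2, h3⟩ := mem_pairsL.1 (hL p (by simp))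
      rw [List.map_cons, List.prod_cons, _root_.map_mul, ih fun q hq => hL q (by simp [hq]),
        _root_.map_zpow, kappa, if_pos h2, rep_kappaLT h1 h2 h3, zpow_of_σ_eq_one]
      apply PairExt.ext
      · funext u v
        simp only [mul_f, inv_one, Equiv.Perm.one_apply, List.map_cons, List.sum_cons, E,
          add_left_inj]
        have e1 : (u = ⟨p.1 - 1, by omega⟩ ∧ v = ⟨p.2 - 1, by omega⟩) ↔
            p = ((u : ℕ) + 1, (v : ℕ) + 1) := by
          simp only [Fin.ext_iff, Prod.ext_iff]; omega
        have e2 : (u = ⟨p.2 - 1, by omega⟩ ∧ v = ⟨p.1 - 1, by omega⟩) ↔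
            p = ((v : ℕ) + 1, (u : ℕ) + 1) := by
          simp only [Fin.ext_iff, Prod.ext_iff]; omega
        simp only [e1, e2, mul_sub, mul_ite, mul_one, mul_zero]
      · simp
  rw [key _ fun _ h => h]
  refine PairExt.ext ?_ rfl
  funext u v
  dsimp only
  rw [← List.sum_toFinset _ nodup_pairsL, Finset.sum_sub_distrib, Finset.sum_ite_eq',
    Finset.sum_ite_eq']
  simp only [List.mem_toFinset, mem_pairsL]
  rcases lt_trichotomy (u : ℕ) v with h | h | h
  · rw [if_pos (by omega), if_neg (by omega), sub_zero]
  · rw [if_neg (by omega), if_neg (by omega), h]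
    have := hskew (v + 1) (v + 1)
    omega
  · rw [if_neg (by omega), if_pos (by omega), zero_sub, ← hskew]

/-- The permutation of `ρ_r ⋯ ρ_{r+m-1}` maps `i` to `i + 1` for `r ≤ i < r + m`, and fixes all
`i > r + m`, in 1-based labels; `u : Fin n` has label `u + 1`. -/
lemma cyc_apply {r : ℕ} (hr : 1 ≤ r) (m : ℕ) (hm : r + m ≤ n) (u : Fin n) :
    ((r ≤ u + 1 → (u : ℕ) + 1 < r + m → (((rep n (cyc n r m)).σ u : Fin n) : ℕ) = u + 1)) ∧
      (r + m ≤ u → (rep n (cyc n r m)).σ u = u) := by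
  induction m generalizing u with
  | zero => constructor <;> intros <;> first | omega | simp [cyc]
  | succ m ih =>
    have hstep : (rep n (cyc n r (m + 1))).σ u = (rep n (cyc n r m)).σ
        (Equiv.swap (⟨r + m - 1, by omega⟩ : Fin n) ⟨r + m, by omega⟩ u) := by
      rw [cyc_succ, _root_.map_mul, mul_σ]
      unfold pN
      rw [dif_pos (by omega), rep_pG, Equiv.Perm.mul_apply]
      have e : hi (⟨r + m - 1, by omega⟩ : Fin (n - 1)) = ⟨r + m, by omega⟩ :=
        Fin.ext (by simp only [hi]; omega)
      rw [e]
      rfl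
    rw [hstep]
    constructor
    · intro h1 h2
      by_cases h : (u : ℕ) + 1 = r + m
      · have hu : u = ⟨r + m - 1, by omega⟩ := Fin.ext (by simp; omega)
        rw [hu, Equiv.swap_apply_left, (ih (by omega) _).2 (by simp)]
        simp; omega
      · rw [Equiv.swap_apply_of_ne_of_ne (by simp [Fin.ext_iff]; omega)
          (by simp [Fin.ext_iff]; omega)]
        exact (ih (by omega) u).1 h1 (by omega)
    · intro h1
      rw [Equiv.swap_apply_of_ne_of_ne (by simp [Fin.ext_iff]; omega)
          (by simp [Fin.ext_iff]; omega)]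
      exact (ih (by omega) u).2 (by omega)

lemma cyc_pow_ne_one {r m l : ℕ} (hr : 1 ≤ r) (hm : r + m ≤ n) (hl : 0 < l) (hlm : l ≤ m) :
    (rep n (cyc n r m)).σ ^ l ≠ 1 := by
  have key (l : ℕ) (hlm : l ≤ m) :
      ((((rep n (cyc n r m)).σ ^ l) ⟨r - 1, by omega⟩ : Fin n) : ℕ) = r - 1 + l := by
    induction l with
    | zero => simp
    | succ l ih =>
      have := ih (by omega)
      rw [pow_succ', Equiv.Perm.mul_apply, (cyc_apply hr m hm _).1 (by omega) (by omega), this]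
      omega
  intro h
  have := key l hlm
  rw [h] at this
  simp at this
  omega

end Exponents

/-- Let `π : VL n → S n` be the epimorphism sending both `yᵢ` and `ρᵢ`
to the transposition `(i, i+1)`, so `PVL n = ker π` and `PVL n' = ⁅ker π, ker π⁆`.
Let `2 ≤ t ≤ n` and let `r₁ < r₁+1 < ⋯ < r₁+t-2` be consecutive integers in `{1, …, n-1}`;
put `w = ρ_{r₁} ρ_{r₁+1} ⋯ ρ_{r₁+t-2}` and `θ = π w`.  Given skew-symmetric integers
`a i j` (encoding `a_{i,j}` for `i < j` extended by `a_{j,i} = -a_{i,j}`), the coset of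
`(∏_{1 ≤ i < j ≤ n} κ_{i,j}^{a_{i,j}}) w` has order `t` in `VL n / PVL n'` if and only if
`∑_{l < t} a_{θ^{-l}(r), θ^{-l}(s)} = 0` for all `1 ≤ r < s ≤ n`. -/
theorem stmt18 (n t : ℕ) (hn : 2 ≤ n) (ht : 2 ≤ t) (htn : t ≤ n)
    (r1 : ℕ) (hr1 : 1 ≤ r1) (hrlast : r1 + t - 2 ≤ n - 1)
    (π : VL n →* Equiv.Perm (Fin n))
    (hπy : ∀ i : Fin (n - 1), π (yG i) =
      Equiv.swap (Fin.castLE (Nat.sub_le n 1) i) ⟨(i : ℕ) + 1, by have := i.isLt; omega⟩)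
    (hπp : ∀ i : Fin (n - 1), π (pG i) =
      Equiv.swap (Fin.castLE (Nat.sub_le n 1) i) ⟨(i : ℕ) + 1, by have := i.isLt; omega⟩)
    (a : ℕ → ℕ → ℤ) (hskew : ∀ i j : ℕ, a j i = - a i j)
    (w : VL n) (hw : w = ((List.range' r1 (t - 1)).map (pN n)).prod)
    (g : VL n) (hg : g = ((pairsL n).map fun p => kappa n p.1 p.2 ^ a p.1 p.2).prod * w) :
    orderOf (QuotientGroup.mk g : VL n ⧸ ⁅π.ker, π.ker⁆) = t ↔
      ∀ u v : Fin n, u < v →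
        (∑ l ∈ Finset.range t,
          a ((((π w)⁻¹ ^ l) u : Fin n) + 1 : ℕ) ((((π w)⁻¹ ^ l) v : Fin n) + 1 : ℕ)) = 0 := by
  have hσ := rep_σ hπy hπp
  set k := ((pairsL n).map fun p => kappa n p.1 p.2 ^ a p.1 p.2).prod with hk
  have hkmem : k ∈ kappaSubgroup n := prod_kappa_mem a
  have hwc : w = cyc n r1 (t - 1) := hw
  have hwt : w ^ t = 1 := by
    have := cyc_pow (n := n) hr1 (t - 1) (by omega)
    rwa [← hwc, show t - 1 + 1 = t by omega] at this
  have hgt : g ^ t ∈ kappaSubgroup n := by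
    have := pow_mul_mem hkmem (w := w) (fun x hx => by rw [hw]; exact prod_conj_mem _ hx) t
    rwa [hwt, inv_one, mul_one, ← hg] at this
  have hrepg : rep n g = ⟨fun u v => a (u + 1) (v + 1), π w⟩ := by
    rw [hg, _root_.map_mul, rep_prod_kappa a hskew]
    apply PairExt.ext
    · funext u v
      rw [PairExt.mul_f, hwc, rep_cyc_f, add_zero]
    · simp [hσ]
  have hπg : π g = π w := by rw [← hσ, hrepg]
  have hrept (u v : Fin n) : (rep n (g ^ t)).f u v = ∑ l ∈ Finset.range t,
      a ((((π w)⁻¹ ^ l) u : Fin n) + 1 : ℕ) ((((π w)⁻¹ ^ l) v : Fin n) + 1 : ℕ) := by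
    rw [_root_.map_pow, PairExt.pow_f, hrepg]
  have hmin : ∀ m < t, 0 < m →
      (QuotientGroup.mk g : VL n ⧸ ⁅π.ker, π.ker⁆) ^ m ≠ 1 := by
    intro m hm hm0 h
    rw [← QuotientGroup.mk_pow, QuotientGroup.eq_one_iff] at h
    have h1 : rep n (g ^ m) = 1 := commutator_le_ker hσ h
    have h2 : π w ^ m = 1 := by
      rw [← hπg, ← _root_.map_pow, ← hσ, h1, PairExt.one_σ]
    rw [← hσ, hwc] at h2
    exact cyc_pow_ne_one hr1 (by omega) hm0 (by omega) h2
  rw [orderOf_eq_iff (by omega), and_iff_left hmin, ← QuotientGroup.mk_pow,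
    QuotientGroup.eq_one_iff]
  constructor
  · intro h u v _
    have h1 : rep n (g ^ t) = 1 := commutator_le_ker hσ h
    rw [← hrept, h1, PairExt.one_f]
  · intro h
    refine mem_commutator_of_rep_eq_one hσ hgt ?_
    apply PairExt.ext
    · funext u v
      rw [hrept, PairExt.one_f]
      rcases lt_trichotomy u v with huv | rfl | huv
      · exact h u v huv
      · refine Finset.sum_eq_zero fun l _ => ?_
        have := hskew ((((π w)⁻¹ ^ l) u : Fin n) + 1 : ℕ) ((((π w)⁻¹ ^ l) u : Fin n) + 1 : ℕ)
        omega
      · rw [← neg_eq_zero, ← Finset.sum_neg_distrib, ← h v u huv]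
        exact Finset.sum_congr rfl fun l _ => (hskew _ _).symm
    · rw [hσ, _root_.map_pow, hπg, ← _root_.map_pow, hwt, _root_.map_one, PairExt.one_σ]
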